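/- (Achievability of the reliability function.) For any discrete memoryless channel W: X → Y on finite alphabets: for 0 ≤ r < I_∞(W), the reliability function satisfies E_rf^{(1+s)}(W,r) ≥ sup_{t≥0} t(r − I_{1+t}(W)) when s ∈ (−1,0], and E_rf^{(1+s)}(W,r) ≥ max{ sup_{t≥s} t(r − I_{1+t}(W)), 0 } when s ∈ (0,∞]; moreover, for r ≥ I_∞(W), E_rf^{(1+s)}(W,r) = ∞ for all s ∈ (0,∞]. -/

import Mathlib

open scoped ENNReal NNReal BigOperators Classical
open Filter

noncomputable section

namespace RST

/-- Base-2 logarithm `ℝ≥0∞ → EReal`, with `log 0 = ⊥` and `log ⊤ = ⊤`. -/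
def elog2 (s : ℝ≥0∞) : EReal :=
  if s = 0 then ⊥ else if s = ⊤ then ⊤ else ((Real.logb 2 s.toReal : ℝ) : EReal)

/-- Base-2 logarithm `EReal → EReal` (for nonnegative arguments). -/
def eLog2 (x : EReal) : EReal :=
  if x = ⊤ then ⊤ else if x ≤ 0 then ⊥ else ((Real.logb 2 x.toReal : ℝ) : EReal)

/-- Base-2 exponential `EReal → ℝ≥0∞`. -/
def epow2 (x : EReal) : ℝ≥0∞ :=
  if x = ⊤ then ⊤ else if x = ⊥ then 0 else ENNReal.ofReal ((2 : ℝ) ^ x.toReal)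

variable {X Y : Type*}

/-- A probability distribution on a finite alphabet, as an `ℝ≥0∞`-valued function. -/
def IsDist [Fintype X] (P : X → ℝ≥0∞) : Prop := ∑ x, P x = 1

/-- A discrete memoryless channel: every row is a probability distribution. -/
def IsChannel [Fintype X] [Fintype Y] (W : X → Y → ℝ≥0∞) : Prop := ∀ x, ∑ y, W x y = 1

/-- Order-`α` Rényi divergence (base 2), with the order `α ∈ [0,∞]` encoded as `ℝ≥0∞`.
The conventions `0/0 = 0` and `a/0 = ∞` (for `a > 0`, `α > 1`) are built into `ℝ≥0∞`
arithmetic.  The second argument is allowed to be an arbitrary nonnegative vector. -/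
def renyiD [Fintype X] (α : ℝ≥0∞) (P Q : X → ℝ≥0∞) : EReal :=
  if α = 0 then - elog2 (∑ x ∈ Finset.univ.filter fun x => P x ≠ 0, Q x)
  else if α = 1 then ∑ x, ((P x).toReal : EReal) * elog2 (P x / Q x)
  else if α = ⊤ then elog2 (⨆ x, P x / Q x)
  else (((α.toReal - 1)⁻¹ : ℝ) : EReal) *
    elog2 (∑ x, P x ^ α.toReal * Q x ^ (1 - α.toReal))

/-- The `X`-marginal of a joint distribution on `X × Y`. -/
def margX [Fintype X] [Fintype Y] (P : X × Y → ℝ≥0∞) : X → ℝ≥0∞ := fun x => ∑ y, P (x, y)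

/-- Order-`α` Rényi mutual information `I_α(X:Y)_P = min_{Q_Y} D_α(P‖P_X × Q_Y)`. -/
def renyiMI [Fintype X] [Fintype Y] (α : ℝ≥0∞) (P : X × Y → ℝ≥0∞) : EReal :=
  ⨅ Q : {Q : Y → ℝ≥0∞ // IsDist Q}, renyiD α P fun p => margX P p.1 * Q.1 p.2

/-- The joint input-output distribution `P_X · W`. -/
def joint [Fintype X] [Fintype Y] (PX : X → ℝ≥0∞) (W : X → Y → ℝ≥0∞) : X × Y → ℝ≥0∞ :=
  fun p => PX p.1 * W p.1 p.2

/-- Order-`α` Rényi capacity `I_α(W) = max_{P_X} I_α(X:Y)_{P_X · W}`. -/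
def renyiCap [Fintype X] [Fintype Y] (α : ℝ≥0∞) (W : X → Y → ℝ≥0∞) : EReal :=
  ⨆ P : {P : X → ℝ≥0∞ // IsDist P}, renyiMI α (joint P.1 W)

/-- `N` is a simulation of a channel `X → Y` with communication cost at most `c` bits:
shared randomness `K = Fin m` with distribution `PK`, a message set `{1,…,M}` with
`log₂ M ≤ c`, an encoder `E` and a decoder `D`. -/
def IsSimulation [Fintype X] [Fintype Y] (c : ℝ) (N : X → Y → ℝ≥0∞) : Prop :=
  ∃ (m M : ℕ) (PK : Fin m → ℝ≥0∞) (E : X → Fin m → Fin M → ℝ≥0∞)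
    (D : Fin M → Fin m → Y → ℝ≥0∞),
    0 < M ∧ Real.logb 2 M ≤ c ∧ (∑ k, PK k = 1) ∧
    (∀ x k, ∑ j, E x k j = 1) ∧ (∀ j k, ∑ y, D j k y = 1) ∧
    ∀ x y, N x y = ∑ k, ∑ j, PK k * E x k j * D j k y

/-- `D_α(W, N) := max_x D_α(W(·|x) ‖ N(·|x))`. -/
def chD [Fintype X] [Fintype Y] (α : ℝ≥0∞) (W N : X → Y → ℝ≥0∞) : EReal :=
  ⨆ x, renyiD α (W x) (N x)

/-- `𝖣_α(W, c) := min_{N ∈ A(W,c)} D_α(W, N)`. -/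
def simD [Fintype X] [Fintype Y] (α : ℝ≥0∞) (W : X → Y → ℝ≥0∞) (c : ℝ) : EReal :=
  ⨅ N : {N : X → Y → ℝ≥0∞ // IsSimulation c N}, chD α W N.1

/-- The `n`-fold memoryless extension `W^{×n}` of a channel `W`. -/
def prodCh [Fintype X] [Fintype Y] (n : ℕ) (W : X → Y → ℝ≥0∞) :
    (Fin n → X) → (Fin n → Y) → ℝ≥0∞ :=
  fun xs ys => ∏ i, W (xs i) (ys i)

/-- A sequence of communication costs with rate at most `r`. -/
def RateOK (r : ℝ) (c : ℕ → ℝ) : Prop :=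
  (∀ n, 0 ≤ c n) ∧ Filter.limsup (fun n : ℕ => ((c n / n : ℝ) : EReal)) Filter.atTop ≤ (r : EReal)

/-- Reliability function `E_rf^{(α)}(W, r)`. -/
def Erf [Fintype X] [Fintype Y] (α : ℝ≥0∞) (W : X → Y → ℝ≥0∞) (r : ℝ) : EReal :=
  ⨆ c : {c : ℕ → ℝ // RateOK r c},
    Filter.liminf
      (fun n : ℕ => (((-1 : ℝ) / n : ℝ) : EReal) * eLog2 (simD α (prodCh n W) (c.1 n)))
      Filter.atTop

/-- Strong converse exponent `E_sc^{(α)}(W, r)`. -/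
def Esc [Fintype X] [Fintype Y] (α : ℝ≥0∞) (W : X → Y → ℝ≥0∞) (r : ℝ) : EReal :=
  ⨅ c : {c : ℕ → ℝ // RateOK r c},
    Filter.limsup
      (fun n : ℕ => (((1 : ℝ) / n : ℝ) : EReal) * simD α (prodCh n W) (c.1 n))
      Filter.atTop

/-- The `α`-Rényi simulation rate `R_RST^{(α)}(W)`. -/
def Rrst [Fintype X] [Fintype Y] (α : ℝ≥0∞) (W : X → Y → ℝ≥0∞) : EReal :=
  ⨅ c : {c : ℕ → ℝ // (∀ n, 0 ≤ c n) ∧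
      Filter.limsup (fun n : ℕ => simD α (prodCh n W) (c n)) Filter.atTop = 0},
    Filter.limsup (fun n : ℕ => ((c.1 n / n : ℝ) : EReal)) Filter.atTop

/-- n-fold product of a joint distribution on `X × Y`, as a distribution on pairs of
sequences. -/
def prodJoint [Fintype X] [Fintype Y] (n : ℕ) (P : X × Y → ℝ≥0∞) :
    (Fin n → X) × (Fin n → Y) → ℝ≥0∞ :=
  fun p => ∏ i, P (p.1 i, p.2 i)

/-- n-fold product distribution. -/
def prodDist [Fintype X] (n : ℕ) (P : X → ℝ≥0∞) : (Fin n → X) → ℝ≥0∞ :=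
  fun xs => ∏ i, P (xs i)

/-- The type (empirical count vector) of a sequence. -/
def seqType [Fintype Y] [DecidableEq Y] {n : ℕ} (ys : Fin n → Y) : Y → ℕ :=
  fun y => (Finset.univ.filter fun i => ys i = y).card

/-- The cardinality of the type class of a sequence. -/
def typeClassCard [Fintype Y] [DecidableEq Y] {n : ℕ} (ys : Fin n → Y) : ℕ :=
  (Finset.univ.filter fun zs : Fin n → Y => seqType zs = seqType ys).card

/-- The number of types of sequences in `Y^n`. -/
def numTypes (Y : Type*) [Fintype Y] [DecidableEq Y] (n : ℕ) : ℕ :=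
  (Finset.univ.image fun ys : Fin n → Y => seqType ys).card

/-- `Φ_{Y^n}`: the uniform mixture over type classes of `Y^n`. -/
def PhiY (Y : Type*) [Fintype Y] [DecidableEq Y] (n : ℕ) : (Fin n → Y) → ℝ≥0∞ :=
  fun ys => ((numTypes Y n : ℝ≥0∞) * (typeClassCard ys : ℝ≥0∞))⁻¹

end RST

/-!
The Rényi divergence is a logarithm of a power mean of the likelihood ratio, hence monotone in its
order, so every exponent achieved at order `1 + t` is achieved at all lower orders.

Take `I` slightly above `renyiCap (1 + t) W`. Since `∑ y, W x y ^ (1 + t) * Q y ^ (-t)` is convex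
in `Q`, and its average over `x` is linear in the input distribution, Sion's minimax theorem gives
one output distribution `Q` with `D_{1+t}(W_x‖Q) ≤ I` for every input `x`. For the order `⊤`,
`Q y ∝ max_x W x y` does this with `I = renyiCap ⊤ W`. Rejection sampling with about
`(n + 1) ^ 2 * 2 ^ (n * r)` shared samples from `Q ^ n` simulates a channel that dominates, up to
the factor `1 - exp (-(n + 1) ^ 2)`, the truncation `min (W ^ n) (2 ^ (n * r) * Q ^ n)`. The
truncation costs a term `2 ^ (t * n * (I - r))` in the moment of order `1 + t`, which is the
exponent `t * (r - I)`. When `r ≥ renyiCap ⊤ W` nothing is truncated, and the only error,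
`exp (-(n + 1) ^ 2)`, beats every exponential. Finally, the exponent is never negative, because a
uniform output independent of the input already has divergence at most linear in `n`.
-/

namespace RST

section Log

lemma elog2_eq_log (a : ℝ≥0∞) : elog2 a = ((Real.log 2)⁻¹ : ℝ) * ENNReal.log a := by
  have hlog : 0 < (Real.log 2)⁻¹ := inv_pos.2 (Real.log_pos one_lt_two)
  unfold elog2
  split_ifs with h0 htop
  · rw [h0, ENNReal.log_zero, EReal.coe_mul_bot_of_pos hlog]
  · rw [htop, ENNReal.log_top, EReal.coe_mul_top_of_pos hlog]
  · rw [ENNReal.log_pos_real h0 htop, ← EReal.coe_mul, Real.logb, div_eq_inv_mul]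

lemma elog2_mono : Monotone elog2 := fun a b hab => by
  simp only [elog2_eq_log]
  have : (0 : EReal) ≤ ((Real.log 2)⁻¹ : ℝ) := by
    exact_mod_cast inv_nonneg.2 (Real.log_nonneg one_le_two)
  gcongr

lemma elog2_mul (a b : ℝ≥0∞) : elog2 (a * b) = elog2 a + elog2 b := by
  simp only [elog2_eq_log, ENNReal.log_mul_add]
  exact EReal.left_distrib_of_nonneg_of_ne_top
    (by exact_mod_cast inv_nonneg.2 (Real.log_nonneg one_le_two)) (EReal.coe_ne_top _) _ _

lemma elog2_prod {ι : Type*} (s : Finset ι) (f : ι → ℝ≥0∞) :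
    elog2 (∏ i ∈ s, f i) = ∑ i ∈ s, elog2 (f i) := by
  induction s using Finset.cons_induction with
  | empty => simp [elog2_eq_log]
  | cons i s hi ih => rw [Finset.prod_cons, Finset.sum_cons, elog2_mul, ih]

lemma elog2_rpow (a : ℝ≥0∞) (s : ℝ) : elog2 (a ^ s) = s * elog2 a := by
  rw [elog2_eq_log, elog2_eq_log, ENNReal.log_rpow, mul_left_comm]

lemma elog2_ofReal {x : ℝ} (hx : 0 < x) : elog2 (ENNReal.ofReal x) = Real.logb 2 x := by
  rw [elog2_eq_log, ENNReal.log_ofReal_of_pos hx, ← EReal.coe_mul, Real.logb, div_eq_inv_mul]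

lemma elog2_le_elog2_iff {a b : ℝ≥0∞} : elog2 a ≤ elog2 b ↔ a ≤ b := by
  refine ⟨fun h => ?_, fun h => elog2_mono h⟩
  have hlog (c : ℝ≥0∞) : ENNReal.log c = Real.log 2 * elog2 c := by
    rw [elog2_eq_log, ← mul_assoc, ← EReal.coe_mul, mul_inv_cancel₀ (Real.log_pos one_lt_two).ne',
      EReal.coe_one, one_mul]
  have hlog_two : (0 : EReal) ≤ Real.log 2 := by exact_mod_cast Real.log_nonneg one_le_two
  rw [← ENNReal.log_le_log_iff, hlog, hlog]
  exact mul_le_mul_of_nonneg_left h hlog_two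

lemma elog2_le_coe_iff {a : ℝ≥0∞} {x : ℝ} : elog2 a ≤ x ↔ a ≤ ENNReal.ofReal (2 ^ x) := by
  rw [← elog2_le_elog2_iff, elog2_ofReal (by positivity), Real.logb_rpow two_pos (by norm_num)]

end Log

section PowerMean

variable {X : Type*} [Fintype X]

/-- The weighted power mean of `f` of exponent `s`, which for `s = 0` is the weighted geometric
mean; the Rényi divergence of order `1 + s` is its logarithm for the likelihood ratio. -/
def powerMean (w f : X → ℝ≥0∞) (s : ℝ) : ℝ≥0∞ :=
  if s = 0 then ∏ x, f x ^ (w x).toReal else (∑ x, w x * f x ^ s) ^ s⁻¹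

variable {w : X → ℝ≥0∞}

lemma IsDist.sum_eq_one (hw : IsDist w) : ∑ x, w x = 1 := hw

lemma IsDist.le_one (hw : IsDist w) (x : X) : w x ≤ 1 :=
  hw ▸ Finset.single_le_sum_of_canonicallyOrdered (Finset.mem_univ x)

lemma IsDist.ne_top (hw : IsDist w) (x : X) : w x ≠ ⊤ :=
  ((hw.le_one x).trans_lt ENNReal.one_lt_top).ne

lemma IsChannel.isDist {Y : Type*} [Fintype Y] {W : X → Y → ℝ≥0∞} (hW : IsChannel W) (x : X) :
    IsDist (W x) := hW x

lemma powerMean_of_ne_zero (w f : X → ℝ≥0∞) {s : ℝ} (hs : s ≠ 0) :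
    powerMean w f s = (∑ x, w x * f x ^ s) ^ s⁻¹ := if_neg hs

lemma powerMean_zero (w f : X → ℝ≥0∞) : powerMean w f 0 = ∏ x, f x ^ (w x).toReal := if_pos rfl

lemma powerMean_inv (w f : X → ℝ≥0∞) {s : ℝ} (hs : s ≠ 0) :
    powerMean w f⁻¹ (-s) = (powerMean w f s)⁻¹ := by
  simp only [powerMean_of_ne_zero w _ (neg_ne_zero.2 hs), powerMean_of_ne_zero w _ hs, Pi.inv_apply,
    ENNReal.inv_rpow, ENNReal.rpow_neg, inv_inv, inv_neg]

lemma powerMean_mono_of_pos (hw : IsDist w) (f : X → ℝ≥0∞) {s s' : ℝ} (hs : 0 < s) (hss' : s ≤ s') :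
    powerMean w f s ≤ powerMean w f s' := by
  have hs' := hs.trans_le hss'
  rw [powerMean_of_ne_zero w f hs.ne', powerMean_of_ne_zero w f hs'.ne',
    ENNReal.le_rpow_inv_iff hs', ← ENNReal.rpow_mul]
  calc (∑ x, w x * f x ^ s) ^ (s⁻¹ * s')
      ≤ ∑ x, w x * (f x ^ s) ^ (s⁻¹ * s') :=
        ENNReal.rpow_arith_mean_le_arith_mean_rpow _ _ _ hw (by rwa [inv_mul_eq_div, one_le_div hs])
    _ = ∑ x, w x * f x ^ s' := by
        simp only [← ENNReal.rpow_mul, mul_inv_cancel_left₀ hs.ne']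

lemma prod_rpow_le_sum_mul (hw : IsDist w) (f : X → ℝ≥0∞) :
    ∏ x, f x ^ (w x).toReal ≤ ∑ x, w x * f x := by
  by_cases hf : ∃ x, w x ≠ 0 ∧ f x = ⊤
  · obtain ⟨x, hwx, hfx⟩ := hf
    exact le_top.trans_eq (ENNReal.sum_eq_top.2
      ⟨x, Finset.mem_univ x, by rw [hfx, ENNReal.mul_top hwx]⟩).symm
  push Not at hf
  have hsum : ∑ x, (w x).toNNReal = 1 := by
    rw [← ENNReal.toNNReal_sum fun x _ => hw.ne_top x, hw, ENNReal.toNNReal_one]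
  calc ∏ x, f x ^ (w x).toReal = ∏ x, ((f x).toNNReal : ℝ≥0∞) ^ (w x).toReal := by
        refine Finset.prod_congr rfl fun x _ => ?_
        by_cases hwx : w x = 0
        · simp [hwx]
        · rw [ENNReal.coe_toNNReal (hf x hwx)]
    _ = ((∏ x, (f x).toNNReal ^ ((w x).toNNReal : ℝ) : ℝ≥0) : ℝ≥0∞) := by
        push_cast
        exact Finset.prod_congr rfl fun x _ =>
          (ENNReal.coe_rpow_of_nonneg _ ENNReal.toReal_nonneg).symm
    _ ≤ ((∑ x, (w x).toNNReal * (f x).toNNReal : ℝ≥0) : ℝ≥0∞) :=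
        ENNReal.coe_le_coe.2 (NNReal.geom_mean_le_arith_mean_weighted _ _ _ hsum)
    _ ≤ ∑ x, w x * f x := by
        push_cast
        exact Finset.sum_le_sum fun x _ =>
          mul_le_mul' ENNReal.coe_toNNReal_le_self ENNReal.coe_toNNReal_le_self

lemma powerMean_zero_le (hw : IsDist w) (f : X → ℝ≥0∞) {s : ℝ} (hs : 0 < s) :
    powerMean w f 0 ≤ powerMean w f s := by
  rw [powerMean_zero, powerMean_of_ne_zero w f hs.ne', ENNReal.le_rpow_inv_iff hs,
    ← ENNReal.prod_rpow_of_nonneg hs.le]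
  simpa only [← ENNReal.rpow_mul, mul_comm] using prod_rpow_le_sum_mul hw fun x => f x ^ s

lemma powerMean_le_zero (hw : IsDist w) (f : X → ℝ≥0∞) {s : ℝ} (hs : s < 0) :
    powerMean w f s ≤ powerMean w f 0 := by
  by_cases hf : ∃ x, w x ≠ 0 ∧ f x = 0
  · obtain ⟨x, hwx, hfx⟩ := hf
    have htop : ∑ x, w x * f x ^ s = ⊤ := ENNReal.sum_eq_top.2
      ⟨x, Finset.mem_univ x, by rw [hfx, ENNReal.zero_rpow_of_neg hs, ENNReal.mul_top hwx]⟩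
    rw [powerMean_of_ne_zero w f hs.ne, htop, ENNReal.top_rpow_of_neg (inv_lt_zero.2 hs)]
    exact zero_le
  push Not at hf
  have hne (x : X) : f x ^ (w x).toReal ≠ 0 := by
    by_cases hwx : w x = 0
    · simp [hwx]
    · simp [ENNReal.rpow_eq_zero_iff, hf x hwx, ENNReal.toReal_nonneg.not_gt]
  have hinv : powerMean w f⁻¹ 0 = (powerMean w f 0)⁻¹ := by
    simp only [powerMean_zero, Pi.inv_apply, ENNReal.inv_rpow]
    exact (ENNReal.prod_inv_distrib fun x _ _ _ _ => .inl (hne x)).symm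
  rw [← ENNReal.inv_le_inv, ← hinv, ← powerMean_inv w f hs.ne]
  exact powerMean_zero_le hw _ (neg_pos.2 hs)

lemma powerMean_mono (hw : IsDist w) (f : X → ℝ≥0∞) : Monotone (powerMean w f) := by
  intro s s' hss'
  rcases lt_trichotomy s 0 with hs | rfl | hs
  · rcases lt_trichotomy s' 0 with hs' | rfl | hs'
    · rw [← ENNReal.inv_le_inv, ← powerMean_inv w f hs.ne, ← powerMean_inv w f hs'.ne]
      exact powerMean_mono_of_pos hw _ (neg_pos.2 hs') (neg_le_neg hss')
    · exact powerMean_le_zero hw f hs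
    · exact (powerMean_le_zero hw f hs).trans (powerMean_zero_le hw f hs')
  · rcases hss'.eq_or_lt with rfl | hs'
    · rfl
    · exact powerMean_zero_le hw f hs'
  · exact powerMean_mono_of_pos hw f hs hss'

lemma powerMean_le_iSup (hw : IsDist w) (f : X → ℝ≥0∞) (s : ℝ) : powerMean w f s ≤ ⨆ x, f x := by
  have hpos : 0 < max s 1 := lt_max_of_lt_right one_pos
  refine (powerMean_mono hw f (le_max_left s 1)).trans ?_
  rw [powerMean_of_ne_zero w f hpos.ne', ENNReal.rpow_inv_le_iff hpos]
  calc ∑ x, w x * f x ^ max s 1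
      ≤ ∑ x, w x * (⨆ x, f x) ^ max s 1 := by
        gcongr with x
        exact le_iSup f x
    _ = (⨆ x, f x) ^ max s 1 := by rw [← Finset.sum_mul, hw, one_mul]

end PowerMean

section RenyiDivergence

variable {X : Type*} [Fintype X] {P : X → ℝ≥0∞}

lemma rpow_mul_rpow_one_sub {p : ℝ≥0∞} (q : ℝ≥0∞) {a : ℝ} (hp : p ≠ ⊤) (ha : 0 < a) :
    p ^ a * q ^ (1 - a) = p * (p / q) ^ (a - 1) := by
  rcases eq_or_ne p 0 with rfl | hp0
  · simp [ha]
  have hsplit : p ^ a = p * p ^ (a - 1) := by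
    simpa using ENNReal.rpow_add_of_add_pos hp 1 (a - 1) (by simpa using ha)
  rw [hsplit, mul_assoc, div_eq_mul_inv, ENNReal.mul_rpow_eq_ite, if_neg (by simp [hp0, hp]),
    ENNReal.inv_rpow, ← ENNReal.rpow_neg, neg_sub]

lemma renyiD_eq_elog2_powerMean {α : ℝ≥0∞} (hα : α ≠ ⊤) (hP : IsDist P) (Q : X → ℝ≥0∞) :
    renyiD α P Q = elog2 (powerMean P (P / Q) (α.toReal - 1)) := by
  rcases eq_or_ne α 0 with rfl | hα0
  · have hsum : ∑ x with P x ≠ 0, Q x = ∑ x, P x * (P x / Q x)⁻¹ := by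
      rw [Finset.sum_filter]
      refine Finset.sum_congr rfl fun x _ => ?_
      split_ifs with hx
      · rw [ENNReal.inv_div (.inr (hP.ne_top x)) (.inr hx), ENNReal.mul_div_cancel hx (hP.ne_top x)]
      · rw [not_not.1 hx, zero_mul]
    rw [renyiD, if_pos rfl, ENNReal.toReal_zero, zero_sub,
      powerMean_of_ne_zero _ _ (neg_ne_zero.2 one_ne_zero), elog2_rpow, hsum]
    simp [ENNReal.rpow_neg_one]
  rcases eq_or_ne α 1 with rfl | hα1
  · simp only [renyiD, one_ne_zero, if_false, if_true, ENNReal.toReal_one, sub_self, powerMean_zero,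
      elog2_prod, elog2_rpow, Pi.div_apply]
  have hexp : α.toReal - 1 ≠ 0 := by
    rw [sub_ne_zero, ← ENNReal.toReal_one]
    exact fun h => hα1 ((ENNReal.toReal_eq_toReal_iff' hα ENNReal.one_ne_top).1 h)
  simp only [renyiD, hα0, hα1, hα, if_false, powerMean_of_ne_zero _ _ hexp, elog2_rpow,
    Pi.div_apply, rpow_mul_rpow_one_sub _ (hP.ne_top _) (ENNReal.toReal_pos hα0 hα)]

lemma renyiD_top (P Q : X → ℝ≥0∞) : renyiD ⊤ P Q = elog2 (⨆ x, P x / Q x) := by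
  simp [renyiD]

lemma renyiD_mono (hP : IsDist P) (Q : X → ℝ≥0∞) : Monotone fun α => renyiD α P Q := by
  intro α β hαβ
  simp only
  rcases eq_or_ne β ⊤ with rfl | hβ
  · rcases eq_or_ne α ⊤ with rfl | hα
    · rfl
    · rw [renyiD_eq_elog2_powerMean hα hP, renyiD_top]
      exact elog2_mono (powerMean_le_iSup hP _ _)
  · rw [renyiD_eq_elog2_powerMean (ne_top_of_le_ne_top hβ hαβ) hP, renyiD_eq_elog2_powerMean hβ hP]
    exact elog2_mono (powerMean_mono hP _ (by gcongr))

end RenyiDivergence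

section Simulation

variable {X Y : Type*} [Fintype X] [Fintype Y]

lemma isSimulation_of_fintype {K : Type*} [Fintype K] {M : ℕ} [NeZero M] {PK : K → ℝ≥0∞}
    (hPK : IsDist PK) {E : X → K → Fin M → ℝ≥0∞} (hE : ∀ x k, IsDist (E x k))
    {D : Fin M → K → Y → ℝ≥0∞} (hD : ∀ j k, IsDist (D j k)) :
    IsSimulation (Real.logb 2 M) fun x y => ∑ k, ∑ j, PK k * E x k j * D j k y := by
  let e := (Fintype.equivFin K).symm
  refine ⟨Fintype.card K, M, PK ∘ e, fun x => E x ∘ e, fun j => D j ∘ e, NeZero.pos M, le_rfl,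
    (e.sum_comp PK).trans hPK, fun x k => hE x _, fun j k => hD j _, fun x y => ?_⟩
  exact (e.sum_comp fun k => ∑ j, PK k * E x k j * D j k y).symm

lemma IsSimulation.mono {c c' : ℝ} {N : X → Y → ℝ≥0∞} (hN : IsSimulation c N) (hc : c ≤ c') :
    IsSimulation c' N := by
  obtain ⟨m, M, PK, E, D, hM, hlog, h⟩ := hN
  exact ⟨m, M, PK, E, D, hM, hlog.trans hc, h⟩

lemma isSimulation_const {Q : Y → ℝ≥0∞} (hQ : IsDist Q) :
    IsSimulation 0 fun (_ : X) y => Q y :=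
  ⟨1, 1, 1, 1, fun _ _ => Q, one_pos, by simp, by simp, by simp, fun _ _ => hQ, by simp⟩

lemma isDist_pi {ι : Type*} [Fintype ι] [DecidableEq ι] {P : ι → Y → ℝ≥0∞}
    (hP : ∀ i, IsDist (P i)) : IsDist fun ys : ι → Y => ∏ i, P i (ys i) := by
  simp only [IsDist, ← Fintype.prod_sum, (hP _).sum_eq_one, Finset.prod_const_one]

lemma IsDist.prodDist {Q : Y → ℝ≥0∞} (hQ : IsDist Q) (n : ℕ) : IsDist (RST.prodDist n Q) :=
  isDist_pi fun _ => hQ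

lemma IsChannel.prodCh {W : X → Y → ℝ≥0∞} (hW : IsChannel W) (n : ℕ) : IsChannel (RST.prodCh n W) :=
  fun xs => isDist_pi fun i => hW (xs i)

end Simulation

section RejectionSampling

variable {X Y : Type*} {M : ℕ} {a : Y → ℝ≥0∞}

/-- Encoder of rejection sampling: with a codebook `k` of samples and acceptance probabilities `a`,
it sends the index of the last accepted sample, and `0` if every sample is rejected. -/
def rejectionEncoder [NeZero M] (a : Y → ℝ≥0∞) (k : Fin M → Y) (j : Fin M) : ℝ≥0∞ :=
  a (k j) * ∏ i with j < i, (1 - a (k i)) + if j = 0 then ∏ i, (1 - a (k i)) else 0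

lemma isDist_rejectionEncoder [NeZero M] (ha : ∀ y, a y ≤ 1) (k : Fin M → Y) :
    IsDist (rejectionEncoder a k) := by
  have h := Finset.prod_add_ordered Finset.univ (fun i => 1 - a (k i)) (fun i => a (k i))
  simp only [tsub_add_cancel_of_le (ha _), Finset.prod_const_one, mul_one] at h
  simp only [IsDist, rejectionEncoder, Finset.sum_add_distrib, Finset.sum_ite_eq',
    Finset.mem_univ, if_true]
  rw [add_comm]
  exact h.symm

variable [Fintype Y]

/-- Output law of rejection sampling: the decoder outputs the sample sent by `rejectionEncoder`,
the codebook consisting of `M` independent samples of `Q`. -/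
def rejectionLaw (M : ℕ) [NeZero M] (Q a : Y → ℝ≥0∞) (y : Y) : ℝ≥0∞ :=
  ∑ k, ∑ j : Fin M, prodDist M Q k * rejectionEncoder a k j * if k j = y then 1 else 0

variable {Q : Y → ℝ≥0∞}

lemma isSimulation_rejectionLaw [Fintype X] [NeZero M] (hQ : IsDist Q) {a : X → Y → ℝ≥0∞}
    (ha : ∀ x y, a x y ≤ 1) :
    IsSimulation (Real.logb 2 M) fun x => rejectionLaw M Q (a x) :=
  isSimulation_of_fintype (hQ.prodDist M)
    (fun x => isDist_rejectionEncoder (ha x)) (D := fun j k y => if k j = y then 1 else 0)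
    fun j k => by simp [IsDist]

lemma sum_mul_one_sub (hQ : IsDist Q) (ha : ∀ y, a y ≤ 1) :
    ∑ y, Q y * (1 - a y) = 1 - ∑ y, Q y * a y := by
  have hadd : ∑ y, Q y * (1 - a y) + ∑ y, Q y * a y = 1 := by
    simp only [← Finset.sum_add_distrib, ← mul_add, tsub_add_cancel_of_le (ha _), mul_one,
      hQ.sum_eq_one]
  exact ENNReal.eq_sub_of_add_eq
    (ne_top_of_le_ne_top ENNReal.one_ne_top (hadd ▸ le_add_self)) hadd

lemma sum_prodDist_mul_last_accepted (hQ : IsDist Q) (ha : ∀ y, a y ≤ 1) (j : Fin M) (y : Y) :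
    ∑ k, prodDist M Q k * (a (k j) * ∏ i with j < i, (1 - a (k i))) * (if k j = y then 1 else 0) =
      Q y * a y * (1 - ∑ z, Q z * a z) ^ (M - 1 - (j : ℕ)) := by
  have hprod (k : Fin M → Y) :
      prodDist M Q k * (a (k j) * ∏ i with j < i, (1 - a (k i))) * (if k j = y then 1 else 0) =
        ∏ i, Q (k i) * (if i = j then a (k i) * (if k i = y then 1 else 0) else 1) *
          (if j < i then 1 - a (k i) else 1) := by
    rw [Finset.prod_mul_distrib, Finset.prod_mul_distrib, Finset.prod_ite_eq', Finset.prod_filter,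
      prodDist, if_pos (Finset.mem_univ j)]
    ring
  have hcoord (i : Fin M) :
      ∑ z, Q z * (if i = j then a z * (if z = y then 1 else 0) else 1) *
          (if j < i then 1 - a z else 1) =
        (if i = j then Q y * a y else 1) * (if j < i then 1 - ∑ z, Q z * a z else 1) := by
    rcases lt_trichotomy i j with hij | rfl | hij
    · simp [hij.ne, hij.not_gt, hQ.sum_eq_one]
    · simp
    · simp [hij.ne', hij, sum_mul_one_sub hQ ha]
  simp only [hprod]
  rw [← Fintype.prod_sum fun i z => Q z * (if i = j then a z * (if z = y then 1 else 0) else 1) *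
          (if j < i then 1 - a z else 1)]
  simp only [hcoord]
  rw [Finset.prod_mul_distrib, Finset.prod_ite_eq',
    if_pos (Finset.mem_univ j), ← Finset.prod_filter, Finset.prod_const, Finset.filter_lt_eq_Ioi,
    Fin.card_Ioi]

lemma mul_geom_sum_le_rejectionLaw [NeZero M] (hQ : IsDist Q) (ha : ∀ y, a y ≤ 1) (y : Y) :
    Q y * a y * ∑ j ∈ Finset.range M, (1 - ∑ z, Q z * a z) ^ j ≤ rejectionLaw M Q a y := by
  calc Q y * a y * ∑ j ∈ Finset.range M, (1 - ∑ z, Q z * a z) ^ j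
      = ∑ j : Fin M, Q y * a y * (1 - ∑ z, Q z * a z) ^ (M - 1 - (j : ℕ)) := by
        rw [Fin.sum_univ_eq_sum_range fun j => Q y * a y * (1 - ∑ z, Q z * a z) ^ (M - 1 - j),
          ← Finset.mul_sum, Finset.sum_range_reflect fun j => (1 - ∑ z, Q z * a z) ^ j]
    _ = ∑ k, ∑ j : Fin M, prodDist M Q k * (a (k j) * ∏ i with j < i, (1 - a (k i))) *
          if k j = y then 1 else 0 := by
        rw [Finset.sum_comm]
        simp only [sum_prodDist_mul_last_accepted hQ ha]
    _ ≤ rejectionLaw M Q a y := by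
        unfold rejectionLaw rejectionEncoder
        gcongr
        exact le_self_add

lemma mul_one_sub_exp_le_geom_sum {L : ℝ} (hL : 1 ≤ L) (n : ℕ) :
    L * (1 - Real.exp (-(n / L))) ≤ ∑ j ∈ Finset.range n, (1 - L⁻¹) ^ j := by
  have hL0 : 0 < L := one_pos.trans_le hL
  have hpow : (1 - L⁻¹) ^ n ≤ Real.exp (-(n / L)) := by
    rw [div_eq_mul_inv, ← mul_neg, Real.exp_nat_mul]
    gcongr
    · exact sub_nonneg.2 (inv_le_one_of_one_le₀ hL)
    · exact Real.one_sub_le_exp_neg _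
  have hgeom : ∑ j ∈ Finset.range n, (1 - L⁻¹) ^ j = L * (1 - (1 - L⁻¹) ^ n) := by
    rw [← mul_neg_geom_sum, sub_sub_cancel, mul_inv_cancel_left₀ hL0.ne']
  rw [hgeom]
  gcongr

lemma mul_min_one_div {p q c : ℝ≥0∞} (hc : c ≠ 0) (hc' : c ≠ ⊤) (hq : q ≠ ⊤) :
    q * min 1 (p / (c * q)) = c⁻¹ * min p (c * q) := by
  rcases eq_or_ne q 0 with rfl | hq0
  · simp
  have hmin : min p (c * q) = c * q * min 1 (p / (c * q)) := by
    rw [mul_min, mul_one, ENNReal.mul_div_cancel (mul_ne_zero hc hq0) (ENNReal.mul_ne_top hc' hq),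
      min_comm]
  rw [hmin, mul_assoc, ENNReal.inv_mul_cancel_left hc hc']

/-- Accepting a sample `y` with probability `min 1 (W x y / (L * Q y))`, so that at least one of
the `M` samples is accepted with probability about `1 - exp (-M / L)`. -/
lemma exists_isSimulation_mul_min_le [Fintype X] (hQ : IsDist Q) {W : X → Y → ℝ≥0∞}
    (hW : IsChannel W) (M : ℕ) [NeZero M] {L : ℝ} (hL : 1 ≤ L) :
    ∃ N : X → Y → ℝ≥0∞, IsSimulation (Real.logb 2 M) N ∧ ∀ x y,
      ENNReal.ofReal (1 - Real.exp (-(M / L))) * min (W x y) (ENNReal.ofReal L * Q y) ≤ N x y := by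
  have hL0 : 0 < L := one_pos.trans_le hL
  set c := ENNReal.ofReal L with hc
  have hc0 : c ≠ 0 := by simpa [hc] using hL0
  let a (x : X) (y : Y) : ℝ≥0∞ := min 1 (W x y / (c * Q y))
  have ha (x : X) (y : Y) : a x y ≤ 1 := min_le_left _ _
  have haccept (x : X) (y : Y) : Q y * a x y = c⁻¹ * min (W x y) (c * Q y) :=
    mul_min_one_div hc0 ENNReal.ofReal_ne_top (hQ.ne_top y)
  refine ⟨_, isSimulation_rejectionLaw hQ ha, fun x y =>
    le_trans ?_ (mul_geom_sum_le_rejectionLaw hQ (ha x) y)⟩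
  have hprob : ∑ z, Q z * a x z ≤ ENNReal.ofReal L⁻¹ := by
    simp only [haccept, ENNReal.ofReal_inv_of_pos hL0, ← Finset.mul_sum]
    calc c⁻¹ * ∑ z, min (W x z) (c * Q z) ≤ c⁻¹ * ∑ z, W x z := by
          gcongr
          exact min_le_left _ _
      _ = c⁻¹ := by rw [hW x, mul_one]
  have hgeom : c * ENNReal.ofReal (1 - Real.exp (-(M / L))) ≤
      ∑ j ∈ Finset.range M, (1 - ∑ z, Q z * a x z) ^ j := by
    have hinv : 0 ≤ 1 - L⁻¹ := sub_nonneg.2 (inv_le_one_of_one_le₀ hL)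
    calc c * ENNReal.ofReal (1 - Real.exp (-(M / L)))
        ≤ ENNReal.ofReal (∑ j ∈ Finset.range M, (1 - L⁻¹) ^ j) := by
          rw [← ENNReal.ofReal_mul hL0.le]
          exact ENNReal.ofReal_le_ofReal (mul_one_sub_exp_le_geom_sum hL M)
      _ = ∑ j ∈ Finset.range M, (1 - ENNReal.ofReal L⁻¹) ^ j := by
          simp only [ENNReal.ofReal_sum_of_nonneg fun _ _ => pow_nonneg hinv _,
            ENNReal.ofReal_pow hinv, ENNReal.ofReal_sub _ (inv_nonneg.2 hL0.le),
            ENNReal.ofReal_one]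
      _ ≤ ∑ j ∈ Finset.range M, (1 - ∑ z, Q z * a x z) ^ j := by gcongr
  calc ENNReal.ofReal (1 - Real.exp (-(M / L))) * min (W x y) (c * Q y)
      = Q y * a x y * (c * ENNReal.ofReal (1 - Real.exp (-(M / L)))) := by
        rw [haccept, mul_comm c⁻¹, mul_assoc, ENNReal.inv_mul_cancel_left hc0 ENNReal.ofReal_ne_top,
          mul_comm]
    _ ≤ Q y * a x y * ∑ j ∈ Finset.range M, (1 - ∑ z, Q z * a x z) ^ j := by gcongr

end RejectionSampling

section DivergenceBounds

variable {Y : Type*} [Fintype Y] {P Q N : Y → ℝ≥0∞} {t : ℝ≥0}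

/-- The moment `∑ y, P y * (P y / Q y) ^ t`, equal to `2 ^ (t * D_{1+t}(P‖Q))` for `t > 0`.
Unlike the divergence it is additive and takes values in `ℝ≥0∞`, where it is convex in `Q`. -/
def renyiMoment (t : ℝ) (P Q : Y → ℝ≥0∞) : ℝ≥0∞ := ∑ y, P y * (P y / Q y) ^ t

lemma renyiD_one_add_eq (hP : IsDist P) (Q : Y → ℝ≥0∞) (ht : 0 < t) :
    renyiD (1 + t) P Q = elog2 ((renyiMoment t P Q) ^ (t : ℝ)⁻¹) := by
  rw [renyiD_eq_elog2_powerMean (by simp) hP, ENNReal.toReal_add ENNReal.one_ne_top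
    ENNReal.coe_ne_top, ENNReal.toReal_one, ENNReal.coe_toReal, add_sub_cancel_left,
    powerMean_of_ne_zero _ _ (by exact_mod_cast ht.ne')]
  rfl

lemma renyiD_one_add_le_iff (hP : IsDist P) (ht : 0 < t) {J : ℝ} :
    renyiD (1 + t) P Q ≤ J ↔
      renyiMoment t P Q ≤ ENNReal.ofReal (2 ^ J) ^ (t : ℝ) := by
  rw [renyiD_one_add_eq hP Q ht, elog2_le_coe_iff,
    ENNReal.rpow_inv_le_iff (by exact_mod_cast ht)]

lemma renyiD_top_le_iff {J : ℝ} :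
    renyiD ⊤ P Q ≤ J ↔ ∀ y, P y ≤ ENNReal.ofReal (2 ^ J) * Q y := by
  have hJ : ENNReal.ofReal ((2 : ℝ) ^ J) ≠ 0 := (ENNReal.ofReal_pos.2 (by positivity)).ne'
  simp only [renyiD_top, elog2_le_coe_iff, iSup_le_iff,
    ENNReal.div_le_iff_le_mul (.inr ENNReal.ofReal_ne_top) (.inr hJ)]

lemma div_rpow_le_of_mul_min_le {p q n κ L : ℝ≥0∞} (hκ : κ ≠ 0) (hκ' : κ ≠ ⊤) (hL : L ≠ 0)
    (hL' : L ≠ ⊤) (hn : κ * min p (L * q) ≤ n) {s : ℝ} (hs : 0 ≤ s) :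
    (p / n) ^ s ≤ κ⁻¹ ^ s * (1 + L⁻¹ ^ s * (p / q) ^ s) := by
  have hdiv : p / n ≤ κ⁻¹ * max 1 (L⁻¹ * (p / q)) := by
    calc p / n ≤ p / (κ * min p (L * q)) := ENNReal.div_le_div_left hn _
      _ = κ⁻¹ * (p / min p (L * q)) := by
        rw [div_eq_mul_inv, div_eq_mul_inv, ENNReal.mul_inv (.inl hκ) (.inl hκ'), mul_left_comm]
      _ ≤ κ⁻¹ * max 1 (L⁻¹ * (p / q)) := by
        gcongr
        rcases min_choice p (L * q) with h | h <;> rw [h]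
        · exact ENNReal.div_self_le_one.trans (le_max_left _ _)
        · rw [div_eq_mul_inv, ENNReal.mul_inv (.inl hL) (.inl hL'), mul_left_comm, ← div_eq_mul_inv]
          exact le_max_right _ _
  calc (p / n) ^ s ≤ (κ⁻¹ * max 1 (L⁻¹ * (p / q))) ^ s := by gcongr
    _ = κ⁻¹ ^ s * max 1 (L⁻¹ ^ s * (p / q) ^ s) := by
      rw [ENNReal.mul_rpow_of_nonneg _ _ hs, (ENNReal.monotone_rpow_of_nonneg hs).map_max,
        ENNReal.one_rpow, ENNReal.mul_rpow_of_nonneg _ _ hs]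
    _ ≤ κ⁻¹ ^ s * (1 + L⁻¹ ^ s * (p / q) ^ s) := by
      gcongr
      exact max_le le_self_add le_add_self

lemma inv_rpow_mul_one_add_eq {t κ : ℝ} (ht : 0 < t) (hκ : 0 < κ) (J R : ℝ) :
    (ENNReal.ofReal κ)⁻¹ ^ t * (1 + (ENNReal.ofReal (2 ^ R))⁻¹ ^ t * ENNReal.ofReal (2 ^ J) ^ t) =
      ENNReal.ofReal (2 ^ (-Real.logb 2 κ + t⁻¹ * Real.logb 2 (1 + 2 ^ (t * (J - R))))) ^ t := by
  have hsum : (0 : ℝ) < 1 + 2 ^ (t * (J - R)) := by positivity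
  have hexp : ((2 : ℝ) ^ (-Real.logb 2 κ + t⁻¹ * Real.logb 2 (1 + 2 ^ (t * (J - R))))) ^ t =
      κ⁻¹ ^ t * (1 + (2 ^ R)⁻¹ ^ t * (2 ^ J) ^ t) := by
    rw [Real.rpow_add two_pos, Real.mul_rpow (by positivity) (by positivity),
      Real.rpow_neg two_pos.le, Real.rpow_logb two_pos (by norm_num) hκ, mul_comm t⁻¹,
      Real.rpow_mul two_pos.le, Real.rpow_logb two_pos (by norm_num) hsum,
      Real.rpow_inv_rpow hsum.le ht.ne', ← Real.mul_rpow (by positivity) (by positivity),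
      ← Real.rpow_neg two_pos.le, ← Real.rpow_add two_pos, ← Real.rpow_mul two_pos.le,
      neg_add_eq_sub, mul_comm t]
  rw [ENNReal.ofReal_rpow_of_pos (Real.rpow_pos_of_pos two_pos (-Real.logb 2 κ + _)), hexp,
    ENNReal.ofReal_mul (by positivity), ENNReal.ofReal_add (by positivity) (by positivity),
    ENNReal.ofReal_mul (by positivity), ENNReal.ofReal_one]
  simp only [← ENNReal.ofReal_inv_of_pos, hκ, Real.rpow_pos_of_pos, two_pos, inv_pos,
    ENNReal.ofReal_rpow_of_pos]

lemma renyiD_one_add_le_of_mul_min_le (hP : IsDist P) (ht : 0 < t) {κ J R : ℝ} (hκ : 0 < κ)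
    (hN : ∀ y, ENNReal.ofReal κ * min (P y) (ENNReal.ofReal (2 ^ R) * Q y) ≤ N y)
    (hJ : renyiD (1 + t) P Q ≤ J) :
    renyiD (1 + t) P N ≤
      (-Real.logb 2 κ + (t : ℝ)⁻¹ * Real.logb 2 (1 + 2 ^ (t * (J - R))) : ℝ) := by
  have hR : (0 : ℝ) < 2 ^ R := by positivity
  rw [renyiD_one_add_le_iff hP ht] at hJ ⊢
  calc ∑ y, P y * (P y / N y) ^ (t : ℝ)
      ≤ ∑ y, P y * ((ENNReal.ofReal κ)⁻¹ ^ (t : ℝ) *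
          (1 + (ENNReal.ofReal (2 ^ R))⁻¹ ^ (t : ℝ) * (P y / Q y) ^ (t : ℝ))) := by
        gcongr with y
        exact div_rpow_le_of_mul_min_le (by simpa using hκ) ENNReal.ofReal_ne_top
          (by simpa using hR) ENNReal.ofReal_ne_top (hN y) t.coe_nonneg
    _ = (ENNReal.ofReal κ)⁻¹ ^ (t : ℝ) *
          (1 + (ENNReal.ofReal (2 ^ R))⁻¹ ^ (t : ℝ) * renyiMoment t P Q) := by
        simp only [renyiMoment, mul_add, mul_one, Finset.mul_sum, Finset.sum_add_distrib,
          ← Finset.sum_mul, hP.sum_eq_one, one_mul]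
        congr! 2 with y
        ring
    _ ≤ (ENNReal.ofReal κ)⁻¹ ^ (t : ℝ) *
          (1 + (ENNReal.ofReal (2 ^ R))⁻¹ ^ (t : ℝ) * ENNReal.ofReal (2 ^ J) ^ (t : ℝ)) := by gcongr
    _ = _ := inv_rpow_mul_one_add_eq (by exact_mod_cast ht) hκ J R

lemma renyiD_top_le_of_mul_le {κ : ℝ} (hκ : 0 < κ) (hN : ∀ y, ENNReal.ofReal κ * P y ≤ N y) :
    renyiD ⊤ P N ≤ (-Real.logb 2 κ : ℝ) := by
  rw [renyiD_top_le_iff]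
  intro y
  rw [Real.rpow_neg two_pos.le, Real.rpow_logb two_pos (by norm_num) hκ,
    ENNReal.ofReal_inv_of_pos hκ, mul_comm, ← div_eq_mul_inv,
    ENNReal.le_div_iff_mul_le (.inl (by simpa using hκ)) (.inl ENNReal.ofReal_ne_top), mul_comm]
  exact hN y

end DivergenceBounds

section Tensorization

variable {ι : Type*} [Fintype ι]

lemma prod_ofReal_two_rpow (J : ι → ℝ) :
    ∏ i, ENNReal.ofReal (2 ^ J i) = ENNReal.ofReal (2 ^ ∑ i, J i) := by
  rw [← ENNReal.ofReal_prod_of_nonneg fun i _ => by positivity, Real.rpow_sum_of_pos two_pos]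

variable {Y : Type*} [DecidableEq ι] [Fintype Y] {P Q : ι → Y → ℝ≥0∞} {J : ι → ℝ}

lemma renyiD_one_add_pi_le {t : ℝ≥0} (ht : 0 < t) (hP : ∀ i, IsDist (P i))
    (hQ : ∀ i, IsDist (Q i)) (hJ : ∀ i, renyiD (1 + t) (P i) (Q i) ≤ J i) :
    renyiD (1 + t) (fun ys : ι → Y => ∏ i, P i (ys i)) (fun ys => ∏ i, Q i (ys i)) ≤
      (∑ i, J i : ℝ) := by
  rw [renyiD_one_add_le_iff (isDist_pi hP) ht, ← prod_ofReal_two_rpow,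
    ← ENNReal.prod_rpow_of_nonneg t.coe_nonneg]
  calc ∑ ys : ι → Y, (∏ i, P i (ys i)) * ((∏ i, P i (ys i)) / ∏ i, Q i (ys i)) ^ (t : ℝ)
      = ∑ ys : ι → Y, ∏ i, P i (ys i) * (P i (ys i) / Q i (ys i)) ^ (t : ℝ) := by
        refine Finset.sum_congr rfl fun ys _ => ?_
        rw [← ENNReal.prod_div_distrib fun i _ j _ _ => .inr ((hQ j).ne_top _),
          ← ENNReal.prod_rpow_of_nonneg t.coe_nonneg, Finset.prod_mul_distrib]
    _ = ∏ i, ∑ y, P i y * (P i y / Q i y) ^ (t : ℝ) :=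
        (Fintype.prod_sum fun i y => P i y * (P i y / Q i y) ^ (t : ℝ)).symm
    _ ≤ ∏ i, ENNReal.ofReal (2 ^ J i) ^ (t : ℝ) :=
        Finset.prod_le_prod' fun i _ => (renyiD_one_add_le_iff (hP i) ht).1 (hJ i)

lemma renyiD_top_pi_le (hJ : ∀ i, renyiD ⊤ (P i) (Q i) ≤ J i) :
    renyiD ⊤ (fun ys : ι → Y => ∏ i, P i (ys i)) (fun ys => ∏ i, Q i (ys i)) ≤
      (∑ i, J i : ℝ) := by
  rw [renyiD_top_le_iff, ← prod_ofReal_two_rpow]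
  intro ys
  rw [← Finset.prod_mul_distrib]
  exact Finset.prod_le_prod' fun i _ => renyiD_top_le_iff.1 (hJ i) (ys i)

end Tensorization

section Minimax

variable {X E : Type*} [Fintype X]

lemma continuousOn_sum_toNNReal_smul (c : X → ℝ≥0∞) :
    ContinuousOn (fun P : X → ℝ => ∑ x, (P x).toNNReal • c x) {P | ∀ x, 0 < P x} := by
  refine continuousOn_finsetSum _ fun x _ P hP => ?_
  simp only [ENNReal.smul_def, smul_eq_mul]
  refine ENNReal.Tendsto.mul_const ?_ (.inl (by simpa using hP x))
  exact (ENNReal.continuous_ofReal.comp (continuous_apply x)).continuousWithinAt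

lemma concaveOn_sum_toNNReal_smul {S : Set (X → ℝ)} (hS : Convex ℝ S) (hS₀ : ∀ P ∈ S, 0 ≤ P)
    (c : X → ℝ≥0∞) : ConcaveOn ℝ≥0 S fun P => ∑ x, (P x).toNNReal • c x := by
  refine ⟨NNReal.convex_iff.2 hS, fun P hP P' hP' a b _ _ _ => le_of_eq ?_⟩
  simp only [Finset.smul_sum, ← Finset.sum_add_distrib, smul_smul, ← add_smul]
  refine Finset.sum_congr rfl fun x _ => congrArg (· • c x) ?_
  simp only [Pi.add_apply, Pi.smul_apply, NNReal.smul_def, smul_eq_mul]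
  rw [Real.toNNReal_add (mul_nonneg a.coe_nonneg (hS₀ P hP x))
    (mul_nonneg b.coe_nonneg (hS₀ P' hP' x)), Real.toNNReal_mul a.coe_nonneg,
    Real.toNNReal_mul b.coe_nonneg, Real.toNNReal_coe, Real.toNNReal_coe]

lemma convexOn_sum_smul [AddCommMonoid E] [SMul ℝ≥0 E] {K : Set E} (hK : Convex ℝ≥0 K)
    {F : X → E → ℝ≥0∞} (hF : ∀ x, ConvexOn ℝ≥0 K (F x)) (p : X → ℝ≥0) :
    ConvexOn ℝ≥0 K fun q => ∑ x, p x • F x q := by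
  induction (Finset.univ : Finset X) using Finset.cons_induction with
  | empty => simpa using convexOn_const 0 hK
  | cons x s hx ih => simpa only [Finset.sum_cons] using! ((hF x).smul zero_le).add ih

lemma convex_stdSimplex_inter_pos : Convex ℝ (stdSimplex ℝ X ∩ {P | ∀ x, 0 < P x}) :=
  (convex_stdSimplex ℝ X).inter <| by
    simpa [Set.pi] using convex_pi (s := Set.univ) fun (_ : X) _ => convex_Ioi (0 : ℝ)

lemma IsDist.toReal_mem_stdSimplex {P : X → ℝ≥0∞} (hP : IsDist P) :
    (fun x => (P x).toReal) ∈ stdSimplex ℝ X :=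
  ⟨fun _ => ENNReal.toReal_nonneg, by
    rw [← ENNReal.toReal_sum fun x _ => hP.ne_top x, hP.sum_eq_one, ENNReal.toReal_one]⟩

lemma isDist_ofReal {P : X → ℝ} (hP : P ∈ stdSimplex ℝ X) :
    IsDist fun x => ENNReal.ofReal (P x) := by
  rw [IsDist, ← ENNReal.ofReal_sum_of_nonneg fun x _ => hP.1 x, hP.2, ENNReal.ofReal_one]

variable [TopologicalSpace E] [AddCommGroup E] [Module ℝ E] [IsTopologicalAddGroup E]
  [ContinuousSMul ℝ E] {K : Set E} {F : X → E → ℝ≥0∞} {c : ℝ≥0∞}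

/-- The weights are kept positive because `P ↦ P x * ⊤` is not upper semicontinuous at `P x = 0`. -/
lemma iInf_iSup_pos_le_of_forall_isDist (hK : Convex ℝ K) (hKc : IsCompact K) (hKn : K.Nonempty)
    (hFcont : ∀ x, ContinuousOn (F x) K) (hFconv : ∀ x, ConvexOn ℝ≥0 K (F x))
    (hc : ∀ P : X → ℝ≥0∞, IsDist P → ⨅ q ∈ K, ∑ x, P x * F x q ≤ c) :
    ⨅ q ∈ K, ⨆ P ∈ stdSimplex ℝ X ∩ {P | ∀ x, 0 < P x}, ∑ x, (P x).toNNReal • F x q ≤ c := by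
  have hK' := NNReal.convex_iff.2 hK
  rw [Sion.minimax' hKn hK hKc]
  · exact iSup₂_le fun P hP => hc _ (isDist_ofReal hP.1)
  · refine fun P _ => ContinuousOn.lowerSemicontinuousOn (continuousOn_finsetSum _ fun x _ => ?_)
    exact (ENNReal.continuous_const_mul ENNReal.coe_ne_top).comp_continuousOn (hFcont x)
  · exact fun P _ u => NNReal.convex_iff.1 ((convexOn_sum_smul hK' hFconv _).quasiconvexOn u)
  · exact convex_stdSimplex_inter_pos
  · exact fun q _ => ((continuousOn_sum_toNNReal_smul _).mono
      Set.inter_subset_right).upperSemicontinuousOn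
  · exact fun q _ u => NNReal.convex_iff.1 ((concaveOn_sum_toNNReal_smul
      convex_stdSimplex_inter_pos (fun P hP => hP.1.1) _).quasiconcaveOn u)

lemma le_of_forall_pos_average_le {c : ℝ≥0∞} {f : X → ℝ≥0∞}
    (hf : ∀ P ∈ stdSimplex ℝ X ∩ {P | ∀ x, 0 < P x}, ∑ x, (P x).toNNReal • f x ≤ c) (x : X) :
    f x ≤ c := by
  have : Nonempty X := ⟨x⟩
  refine ENNReal.le_of_forall_lt_one_mul_le fun a ha => ?_
  lift a to ℝ≥0 using ha.ne_top
  have ha' : 0 < 1 - (a : ℝ) := sub_pos.2 (by exact_mod_cast ha)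
  let P : X → ℝ := (a : ℝ) • Pi.single x 1 + (1 - (a : ℝ)) • fun _ => (Fintype.card X : ℝ)⁻¹
  have hunif : (fun _ => (Fintype.card X : ℝ)⁻¹) ∈ stdSimplex ℝ X :=
    ⟨fun _ => by positivity, by simp⟩
  have hle : (a : ℝ) ≤ P x := by
    simp only [P, Pi.add_apply, Pi.smul_apply, Pi.single_eq_same, smul_eq_mul, mul_one]
    exact le_add_of_nonneg_right (by positivity)
  have hP : P ∈ stdSimplex ℝ X ∩ {P | ∀ x, 0 < P x} :=
    ⟨convex_stdSimplex ℝ X (single_mem_stdSimplex ℝ x) hunif a.coe_nonneg ha'.le (by ring),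
      fun y => add_pos_of_nonneg_of_pos
        (mul_nonneg a.coe_nonneg ((single_mem_stdSimplex ℝ x).1 y))
        (mul_pos ha' (inv_pos.2 (by exact_mod_cast Fintype.card_pos_iff.2 ⟨x⟩)))⟩
  calc (a : ℝ≥0∞) * f x ≤ (P x).toNNReal • f x := by
        rw [ENNReal.smul_def, smul_eq_mul]
        gcongr
        exact NNReal.le_toNNReal_of_coe_le hle
    _ ≤ ∑ y, (P y).toNNReal • f y :=
        Finset.single_le_sum_of_canonicallyOrdered (f := fun y => (P y).toNNReal • f y)
          (Finset.mem_univ x)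
    _ ≤ c := hf P hP

lemma exists_forall_le_of_forall_isDist (hK : Convex ℝ K) (hKc : IsCompact K) (hKn : K.Nonempty)
    (hFcont : ∀ x, ContinuousOn (F x) K) (hFconv : ∀ x, ConvexOn ℝ≥0 K (F x))
    (hc : ∀ P : X → ℝ≥0∞, IsDist P → ⨅ q ∈ K, ∑ x, P x * F x q ≤ c) {c' : ℝ≥0∞} (hcc' : c < c') :
    ∃ q ∈ K, ∀ x, F x q ≤ c' := by
  have hlt := (iInf_iSup_pos_le_of_forall_isDist hK hKc hKn hFcont hFconv hc).trans_lt hcc'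
  simp only [iInf_lt_iff, exists_prop] at hlt
  obtain ⟨q, hq, hlt⟩ := hlt
  exact ⟨q, hq, le_of_forall_pos_average_le (iSup₂_le_iff.1 hlt.le)⟩

end Minimax

section Capacity

variable {X Y : Type*} [Fintype X] [Fintype Y]

lemma convexOn_rpow_neg {t : ℝ} (ht : 0 < t) :
    ConvexOn ℝ≥0 Set.univ fun x : ℝ≥0∞ => x ^ (-t) := by
  refine ⟨convex_univ, fun x _ y _ a b _ _ hab => ?_⟩
  have hw : IsDist ![(a : ℝ≥0∞), b] := by
    simpa [IsDist] using congrArg ((↑) : ℝ≥0 → ℝ≥0∞) hab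
  have hmean := powerMean_mono hw ![x, y] (show -t ≤ 1 by linarith)
  rw [powerMean_of_ne_zero _ _ (neg_ne_zero.2 ht.ne'), powerMean_of_ne_zero _ _ one_ne_zero,
    inv_neg, ENNReal.rpow_neg, ENNReal.inv_le_iff_inv_le] at hmean
  simpa [ENNReal.rpow_neg, ENNReal.smul_def, ENNReal.le_rpow_inv_iff ht, ENNReal.inv_rpow]
    using hmean

lemma convexOn_renyiMoment_ofReal {t : ℝ} (ht : 0 < t) (P : Y → ℝ≥0∞) :
    ConvexOn ℝ≥0 (stdSimplex ℝ Y) fun q => renyiMoment t P fun y => ENNReal.ofReal (q y) := by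
  refine ⟨NNReal.convex_iff.2 (convex_stdSimplex ℝ Y), fun q hq q' hq' a b ha hb hab => ?_⟩
  have hcombo (y : Y) : ENNReal.ofReal ((a • q + b • q') y) =
      a • ENNReal.ofReal (q y) + b • ENNReal.ofReal (q' y) := by
    simp only [Pi.add_apply, Pi.smul_apply, NNReal.smul_def, smul_eq_mul, ENNReal.smul_def]
    rw [ENNReal.ofReal_add (mul_nonneg a.coe_nonneg (hq.1 y)) (mul_nonneg b.coe_nonneg (hq'.1 y)),
      ENNReal.ofReal_mul a.coe_nonneg, ENNReal.ofReal_mul b.coe_nonneg, ENNReal.ofReal_coe_nnreal,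
      ENNReal.ofReal_coe_nnreal]
  simp only [renyiMoment, hcombo, Finset.smul_sum, ← Finset.sum_add_distrib, div_eq_mul_inv,
    ENNReal.mul_rpow_of_nonneg _ _ ht.le, ← ENNReal.rpow_neg_one, ← ENNReal.rpow_mul, neg_one_mul]
  gcongr with y
  calc P y * (P y ^ t * (a • ENNReal.ofReal (q y) + b • ENNReal.ofReal (q' y)) ^ (-t))
      ≤ P y * (P y ^ t * (a • ENNReal.ofReal (q y) ^ (-t) + b • ENNReal.ofReal (q' y) ^ (-t))) := by
        gcongr
        exact (convexOn_rpow_neg ht).2 (Set.mem_univ _) (Set.mem_univ _) ha hb hab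
    _ = _ := by simp only [ENNReal.smul_def, smul_eq_mul]; ring

lemma continuous_renyiMoment_ofReal (t : ℝ) {P : Y → ℝ≥0∞} (hP : ∀ y, P y ≠ ⊤) :
    Continuous fun q : Y → ℝ => renyiMoment t P fun y => ENNReal.ofReal (q y) := by
  refine continuous_finsetSum _ fun y _ => (ENNReal.continuous_const_mul (hP y)).comp ?_
  refine ENNReal.continuous_rpow_const.comp ((ENNReal.continuous_const_mul (hP y)).comp ?_)
  exact continuous_inv.comp (ENNReal.continuous_ofReal.comp (continuous_apply y))

variable {P : X → ℝ≥0∞} {W : X → Y → ℝ≥0∞} {Q : Y → ℝ≥0∞}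

lemma isDist_joint (hP : IsDist P) (hW : IsChannel W) : IsDist (joint P W) := by
  simp only [IsDist, joint, Fintype.sum_prod_type, ← Finset.mul_sum, hW _, mul_one, hP.sum_eq_one]

lemma margX_joint (P : X → ℝ≥0∞) (hW : IsChannel W) : margX (joint P W) = P := by
  funext x
  simp only [margX, joint, ← Finset.mul_sum, hW _, mul_one]

lemma renyiMoment_joint (t : ℝ) (hP : IsDist P) :
    renyiMoment t (joint P W) (fun p => P p.1 * Q p.2) = ∑ x, P x * renyiMoment t (W x) Q := by
  simp only [renyiMoment, joint, Fintype.sum_prod_type, Finset.mul_sum]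
  congr! 2 with x _ y
  rcases eq_or_ne (P x) 0 with hx | hx
  · simp [hx]
  · rw [ENNReal.mul_div_mul_left _ _ hx (hP.ne_top x), mul_assoc]

lemma iInf_sum_mul_renyiMoment_le {t : ℝ≥0} (ht : 0 < t) (hW : IsChannel W) {I : ℝ}
    (hI : renyiCap (1 + t) W < I) (hP : IsDist P) :
    ⨅ q ∈ stdSimplex ℝ Y, ∑ x, P x * renyiMoment t (W x) (fun y => ENNReal.ofReal (q y)) ≤
      ENNReal.ofReal (2 ^ I) ^ (t : ℝ) := by
  obtain ⟨⟨Q, hQ⟩, hlt⟩ := iInf_lt_iff.1 <|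
    (le_iSup (fun P : {P : X → ℝ≥0∞ // IsDist P} => renyiMI (1 + t) (joint P.1 W))
      ⟨P, hP⟩).trans_lt hI
  rw [margX_joint P hW] at hlt
  have hle := (renyiD_one_add_le_iff (isDist_joint hP hW) ht).1 hlt.le
  rw [renyiMoment_joint t hP] at hle
  refine iInf₂_le_of_le _ hQ.toReal_mem_stdSimplex ?_
  simpa only [ENNReal.ofReal_toReal (hQ.ne_top _)] using hle

lemma exists_isDist_renyiD_one_add_le_of_renyiCap_lt [Nonempty Y] {t : ℝ≥0} (ht : 0 < t)
    (hW : IsChannel W) {I : ℝ} (hI : renyiCap (1 + t) W < I) :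
    ∃ Q, IsDist Q ∧ ∀ x, renyiD (1 + t) (W x) Q ≤ I := by
  obtain ⟨I', hI', hlt⟩ := EReal.lt_iff_exists_real_btwn.1 hI
  have hpow : ENNReal.ofReal (2 ^ I') ^ (t : ℝ) < ENNReal.ofReal (2 ^ I) ^ (t : ℝ) := by
    refine ENNReal.rpow_lt_rpow ?_ (by exact_mod_cast ht)
    rw [ENNReal.ofReal_lt_ofReal_iff (by positivity)]
    exact Real.rpow_lt_rpow_of_exponent_lt one_lt_two (by exact_mod_cast hlt)
  obtain ⟨q, hq, hle⟩ : ∃ q ∈ stdSimplex ℝ Y, ∀ x,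
      renyiMoment t (W x) (fun y => ENNReal.ofReal (q y)) ≤ ENNReal.ofReal (2 ^ I) ^ (t : ℝ) := by
    refine exists_forall_le_of_forall_isDist (convex_stdSimplex ℝ Y) (isCompact_stdSimplex ℝ Y)
      ⟨_, single_mem_stdSimplex ℝ (Classical.arbitrary Y)⟩ ?_ ?_ ?_ hpow
    · exact fun x => (continuous_renyiMoment_ofReal t (hW.isDist x).ne_top).continuousOn
    · exact fun x => convexOn_renyiMoment_ofReal (by exact_mod_cast ht) (W x)
    · exact fun P hP => iInf_sum_mul_renyiMoment_le ht hW hI' hP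
  exact ⟨_, isDist_ofReal hq, fun x => (renyiD_one_add_le_iff (hW.isDist x) ht).2 (hle x)⟩

omit [Fintype X] in
lemma sum_iSup_le_iSup_div (W : X → Y → ℝ≥0∞) (hQ : IsDist Q) :
    ∑ y, ⨆ x, W x y ≤ ⨆ p : X × Y, W p.1 p.2 / Q p.2 := by
  rcases eq_or_ne (⨆ p : X × Y, W p.1 p.2 / Q p.2) ⊤ with htop | htop
  · exact htop ▸ le_top
  calc ∑ y, ⨆ x, W x y ≤ ∑ y, (⨆ p : X × Y, W p.1 p.2 / Q p.2) * Q y := by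
        gcongr with y
        exact iSup_le fun x => (ENNReal.div_le_iff_le_mul (.inr htop) (.inl (hQ.ne_top y))).1
          (le_iSup (fun p : X × Y => W p.1 p.2 / Q p.2) (x, y))
    _ = ⨆ p : X × Y, W p.1 p.2 / Q p.2 := by rw [← Finset.mul_sum, hQ.sum_eq_one, mul_one]

variable [Nonempty X]

lemma isDist_const_card_inv : IsDist fun _ : X => (Fintype.card X : ℝ≥0∞)⁻¹ := by
  simp [IsDist, ENNReal.mul_inv_cancel]

lemma elog2_sum_iSup_le_renyiCap_top (hW : IsChannel W) :
    elog2 (∑ y, ⨆ x, W x y) ≤ renyiCap ⊤ W := by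
  refine le_iSup_of_le ⟨_, isDist_const_card_inv⟩ (le_iInf fun ⟨Q, hQ⟩ => ?_)
  simp only [renyiD_top, margX_joint _ hW, joint, elog2_le_elog2_iff]
  simp only [ENNReal.mul_div_mul_left _ _
    (ENNReal.inv_ne_zero.2 (ENNReal.natCast_ne_top (Fintype.card X)))
    (ENNReal.inv_ne_top.2 (by simp : (Fintype.card X : ℝ≥0∞) ≠ 0))]
  exact sum_iSup_le_iSup_div W hQ

lemma exists_isDist_renyiD_top_le_renyiCap (hW : IsChannel W) :
    ∃ Q, IsDist Q ∧ ∀ x, renyiD ⊤ (W x) Q ≤ renyiCap ⊤ W := by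
  set G := ∑ y, ⨆ x, W x y
  have hG0 : G ≠ 0 := by
    have hle : 1 ≤ G := (hW (Classical.arbitrary X)).symm.trans_le
      (Finset.sum_le_sum fun y _ => le_iSup (W · y) _)
    exact (one_pos.trans_le hle).ne'
  have hGt : G ≠ ⊤ := ENNReal.sum_ne_top.2 fun y _ =>
    ((iSup_le fun x => (hW.isDist x).le_one y).trans_lt ENNReal.one_lt_top).ne
  refine ⟨fun y => (⨆ x, W x y) / G, ?_, fun x => ?_⟩
  · simp only [IsDist, div_eq_mul_inv, ← Finset.sum_mul]
    exact ENNReal.mul_inv_cancel hG0 hGt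
  · refine le_trans ?_ (elog2_sum_iSup_le_renyiCap_top hW)
    rw [renyiD_top, elog2_le_elog2_iff]
    refine iSup_le fun y => ENNReal.div_le_of_le_mul ?_
    rw [ENNReal.mul_div_cancel hG0 hGt]
    exact le_iSup (W · y) x

end Capacity

section Codebook

/-- Number of candidate output words drawn in the `n`-letter scheme of rate `r`. The polynomial
factor does not affect the rate, but makes the probability `exp (-(n + 1) ^ 2)` of rejecting all
candidates negligible against every exponential. -/
def codebookSize (r : ℝ) (n : ℕ) : ℕ := ⌈((n : ℝ) + 1) ^ 2 * 2 ^ (n * r)⌉₊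

lemma codebookSize_pos (r : ℝ) (n : ℕ) : 0 < codebookSize r n := by
  rw [codebookSize, Nat.ceil_pos]
  positivity

lemma le_codebookSize (r : ℝ) (n : ℕ) : ((n : ℝ) + 1) ^ 2 * 2 ^ (n * r) ≤ codebookSize r n :=
  Nat.le_ceil _

lemma logb_codebookSize_nonneg (r : ℝ) (n : ℕ) : 0 ≤ Real.logb 2 (codebookSize r n) :=
  Real.logb_nonneg one_lt_two (by exact_mod_cast codebookSize_pos r n)

lemma logb_codebookSize_le {r : ℝ} (hr : 0 ≤ r) (n : ℕ) :
    Real.logb 2 (codebookSize r n) ≤ 1 + 2 * Real.logb 2 (n + 1) + n * r := by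
  have hpow : (1 : ℝ) ≤ 2 ^ (n * r) := Real.one_le_rpow one_le_two (by positivity)
  have hge : 1 ≤ ((n : ℝ) + 1) ^ 2 * 2 ^ (n * r) :=
    one_le_mul_of_one_le_of_one_le (one_le_pow₀ (by simp)) hpow
  have hle : (codebookSize r n : ℝ) ≤ 2 * ((n + 1) ^ 2 * 2 ^ (n * r)) := by
    have := (Nat.ceil_lt_add_one (zero_le_one.trans hge)).le
    rw [codebookSize]
    linarith
  calc Real.logb 2 (codebookSize r n) ≤ Real.logb 2 (2 * ((n + 1) ^ 2 * 2 ^ (n * r))) :=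
        Real.logb_le_logb_of_le one_lt_two (by exact_mod_cast codebookSize_pos r n) hle
    _ = 1 + 2 * Real.logb 2 (n + 1) + n * r := by
        rw [Real.logb_mul (by positivity) (by positivity),
          Real.logb_mul (by positivity) (by positivity), Real.logb_pow,
          Real.logb_rpow two_pos (by norm_num), Real.logb_self_eq_one one_lt_two]
        push_cast
        ring

lemma tendsto_logb_add_one_div_atTop :
    Tendsto (fun n : ℕ => Real.logb 2 (n + 1) / n) atTop (nhds 0) := by
  have hlog := ((Real.tendsto_pow_log_div_mul_add_atTop 1 (-1) 1 one_ne_zero).comp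
    (tendsto_atTop_add_const_right atTop (1 : ℝ) tendsto_natCast_atTop_atTop)).div_const
      (Real.log 2)
  rw [zero_div] at hlog
  refine hlog.congr fun n => ?_
  simp only [Function.comp, Real.logb, pow_one, one_mul, add_neg_cancel_right]
  ring

lemma rateOK_logb_codebookSize {r : ℝ} (hr : 0 ≤ r) :
    RateOK r fun n => Real.logb 2 (codebookSize r n) := by
  refine ⟨logb_codebookSize_nonneg r, ?_⟩
  have hlim : Tendsto (fun n : ℕ => (1 : ℝ) / n + 2 * (Real.logb 2 (n + 1) / n) + r)
      atTop (nhds r) := by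
    simpa using (tendsto_one_div_atTop_nhds_zero_nat.add
      (tendsto_logb_add_one_div_atTop.const_mul 2)).add_const r
  rw [← ((continuous_coe_real_ereal.tendsto r).comp hlim).limsup_eq]
  refine limsup_le_limsup ?_
  filter_upwards [eventually_gt_atTop 0] with n hn
  have hn' : (0 : ℝ) < n := by exact_mod_cast hn
  rw [Function.comp_apply, EReal.coe_le_coe_iff, div_le_iff₀ hn']
  calc Real.logb 2 (codebookSize r n) ≤ 1 + 2 * Real.logb 2 (n + 1) + n * r :=
        logb_codebookSize_le hr n
    _ = (1 / n + 2 * (Real.logb 2 (n + 1) / n) + r) * n := by field_simp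

lemma exists_isSimulation_prodCh [Fintype X] [Fintype Y] {W : X → Y → ℝ≥0∞} (hW : IsChannel W)
    {Q : Y → ℝ≥0∞} (hQ : IsDist Q) {r : ℝ} (hr : 0 ≤ r) (n : ℕ) :
    ∃ N, IsSimulation (Real.logb 2 (codebookSize r n)) N ∧ ∀ xs ys,
      ENNReal.ofReal (1 - Real.exp (-((n : ℝ) + 1) ^ 2)) *
        min (prodCh n W xs ys) (ENNReal.ofReal (2 ^ (n * r)) * prodDist n Q ys) ≤ N xs ys := by
  have : NeZero (codebookSize r n) := ⟨(codebookSize_pos r n).ne'⟩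
  obtain ⟨N, hN, hle⟩ := exists_isSimulation_mul_min_le (hQ.prodDist n) (hW.prodCh n)
    (codebookSize r n) (Real.one_le_rpow one_le_two (by positivity : 0 ≤ n * r))
  refine ⟨N, hN, fun xs ys => le_trans ?_ (hle xs ys)⟩
  gcongr
  rw [le_div_iff₀ (by positivity)]
  exact le_codebookSize r n

lemma exp_neg_le_two_rpow_neg {u : ℝ} (hu : 0 ≤ u) : Real.exp (-u) ≤ 2 ^ (-u) := by
  rw [Real.rpow_def_of_pos two_pos, Real.exp_le_exp, mul_neg, neg_le_neg_iff]
  exact mul_le_of_le_one_left hu (Real.log_two_lt_d9.le.trans (by norm_num))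

lemma logb_two_one_add_le {x : ℝ} (hx : 0 ≤ x) : Real.logb 2 (1 + x) ≤ 2 * x := by
  have hlog : Real.log (1 + x) ≤ x := by
    linarith [Real.log_le_sub_one_of_pos (by linarith : 0 < 1 + x)]
  rw [Real.logb, div_le_iff₀ (Real.log_pos one_lt_two)]
  nlinarith [Real.log_two_gt_d9]

lemma neg_logb_one_sub_exp_le {u : ℝ} (hu : 1 ≤ u) :
    -Real.logb 2 (1 - Real.exp (-u)) ≤ 4 * 2 ^ (-u) := by
  have hhalf : Real.exp (-u) ≤ 1 / 2 := by
    refine (exp_neg_le_two_rpow_neg (by linarith)).trans ?_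
    simpa [Real.rpow_neg_one] using
      Real.rpow_le_rpow_of_exponent_le one_le_two (neg_le_neg hu)
  have hinv : (1 - Real.exp (-u))⁻¹ ≤ 1 + 2 * Real.exp (-u) := by
    rw [inv_le_iff_one_le_mul₀ (by linarith)]
    nlinarith [Real.exp_pos (-u)]
  calc -Real.logb 2 (1 - Real.exp (-u)) = Real.logb 2 (1 - Real.exp (-u))⁻¹ :=
        (Real.logb_inv _ _).symm
    _ ≤ Real.logb 2 (1 + 2 * Real.exp (-u)) :=
        Real.logb_le_logb_of_le one_lt_two (inv_pos.2 (by linarith)) hinv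
    _ ≤ 2 * (2 * Real.exp (-u)) := logb_two_one_add_le (by positivity)
    _ ≤ 4 * 2 ^ (-u) := by linarith [exp_neg_le_two_rpow_neg (by linarith : 0 ≤ u)]

end Codebook

section ReliabilityFunction

variable {X Y : Type*} [Fintype X] [Fintype Y] {W : X → Y → ℝ≥0∞} {α : ℝ≥0∞}

lemma eLog2_mono : Monotone eLog2 := by
  intro x y hxy
  induction y with
  | top => simp [eLog2]
  | bot => rw [le_bot_iff.1 hxy]
  | coe y =>
    induction x with
    | top => simp at hxy
    | bot => simp [eLog2]
    | coe x =>
      rw [EReal.coe_le_coe_iff] at hxy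
      by_cases hx : x ≤ 0
      · simp [eLog2, hx]
      · have hx' := not_le.1 hx
        simpa [eLog2, hx, (hx'.trans_le hxy).not_ge] using
          Real.logb_le_logb_of_le one_lt_two hx' hxy

lemma eLog2_two_rpow (a : ℝ) : eLog2 ((2 ^ a : ℝ) : EReal) = a := by
  have hpos : (0 : ℝ) < 2 ^ a := by positivity
  simp [eLog2, hpos]

lemma antitone_coe_neg_one_div_mul (n : ℕ) :
    Antitone fun x : EReal => (((-1 : ℝ) / n : ℝ) : EReal) * x := by
  intro x y hxy
  have hneg : (-1 : ℝ) / n ≤ 0 := div_nonpos_of_nonpos_of_nonneg (by norm_num) n.cast_nonneg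
  simpa only [mul_comm] using EReal.mul_le_mul_of_nonpos_right hxy (by exact_mod_cast hneg)

lemma simD_le {c : ℝ} {N : X → Y → ℝ≥0∞} {d : EReal} (hN : IsSimulation c N)
    (hd : ∀ x, renyiD α (W x) (N x) ≤ d) : simD α W c ≤ d :=
  iInf_le_of_le ⟨N, hN⟩ (iSup_le hd)

lemma simD_mono (hW : IsChannel W) (c : ℝ) : Monotone fun α => simD α W c := fun _ _ hαβ =>
  iInf_mono fun N => iSup_mono fun x => renyiD_mono (hW.isDist x) (N.1 x) hαβ

lemma Erf_antitone (hW : IsChannel W) (r : ℝ) : Antitone fun α => Erf α W r := fun _ _ hαβ =>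
  iSup_mono fun c => liminf_le_liminf <| .of_forall fun n =>
    antitone_coe_neg_one_div_mul n (eLog2_mono (simD_mono (hW.prodCh n) (c.1 n) hαβ))

lemma le_neg_one_div_mul_eLog2 {n : ℕ} (hn : 0 < n) {x : EReal} {v : ℝ}
    (hx : x ≤ (2 ^ (-(n * v)) : ℝ)) : (v : EReal) ≤ (((-1 : ℝ) / n : ℝ) : EReal) * eLog2 x := by
  refine le_trans (le_of_eq ?_) (antitone_coe_neg_one_div_mul n (eLog2_mono hx))
  have hn' : (n : ℝ) ≠ 0 := by exact_mod_cast hn.ne'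
  simp only [eLog2_two_rpow, ← EReal.coe_mul]
  field_simp

lemma coe_le_Erf_of_eventually_simD_le {r : ℝ} {c : ℕ → ℝ} (hc : RateOK r c) {v C : ℝ}
    (h : ∀ᶠ n : ℕ in atTop, simD α (prodCh n W) (c n) ≤ (C * 2 ^ (-(n * v)) : ℝ)) :
    (v : EReal) ≤ Erf α W r := by
  refine EReal.ge_of_forall_gt_iff_ge.1 fun v' hv' => ?_
  have hbase : 1 < (2 : ℝ) ^ (v - v') :=
    Real.one_lt_rpow one_lt_two (sub_pos.2 (by exact_mod_cast hv'))
  refine le_trans ?_ (le_iSup _ (⟨c, hc⟩ : {c : ℕ → ℝ // RateOK r c}))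
  refine le_liminf_of_le (by isBoundedDefault) ?_
  filter_upwards [h, eventually_gt_atTop 0,
    (tendsto_pow_atTop_atTop_of_one_lt hbase).eventually_ge_atTop C] with n hn hn0 hC
  refine le_neg_one_div_mul_eLog2 hn0 (hn.trans (EReal.coe_le_coe_iff.2 ?_))
  calc C * 2 ^ (-(n * v)) ≤ ((2 : ℝ) ^ (v - v')) ^ n * 2 ^ (-(n * v)) := by gcongr
    _ = 2 ^ (-(n * v')) := by
        rw [← Real.rpow_mul_natCast two_pos.le, ← Real.rpow_add two_pos]
        congr 1
        ring

lemma simD_top_le_logb_card [Nonempty Y] (hW : IsChannel W) {c : ℝ} (hc : 0 ≤ c) :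
    simD ⊤ W c ≤ (Real.logb 2 (Fintype.card Y) : ℝ) := by
  refine simD_le ((isSimulation_const isDist_const_card_inv).mono hc) fun x => ?_
  rw [renyiD_top_le_iff]
  intro y
  rw [Real.rpow_logb two_pos (by norm_num) (by exact_mod_cast Fintype.card_pos),
    ENNReal.ofReal_natCast, ENNReal.mul_inv_cancel (by simp) (by simp)]
  exact (hW.isDist x).le_one y

lemma Erf_nonneg [Nonempty Y] (hW : IsChannel W) (α : ℝ≥0∞) {r : ℝ} (hr : 0 ≤ r) :
    0 ≤ Erf α W r := by
  refine le_trans ?_ (Erf_antitone hW r le_top)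
  refine EReal.ge_of_forall_gt_iff_ge.1 fun v hv => ?_
  have hv' : 0 < -v * Real.log 2 :=
    mul_pos (neg_pos.2 (by exact_mod_cast hv)) (Real.log_pos one_lt_two)
  have hcard : 0 ≤ Real.logb 2 (Fintype.card Y) :=
    Real.logb_nonneg one_lt_two (by exact_mod_cast Fintype.card_pos)
  refine coe_le_Erf_of_eventually_simD_le (rateOK_logb_codebookSize hr)
    (C := Real.logb 2 (Fintype.card Y) / (-v * Real.log 2)) (.of_forall fun n => ?_)
  refine (simD_top_le_logb_card (hW.prodCh n) (logb_codebookSize_nonneg r n)).trans ?_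
  have hexp : n * (-v * Real.log 2) ≤ (2 : ℝ) ^ (-(n * v)) := by
    rw [Real.rpow_def_of_pos two_pos]
    linarith [Real.add_one_le_exp (Real.log 2 * -(n * v))]
  rw [EReal.coe_le_coe_iff, Fintype.card_pi_const, Nat.cast_pow, Real.logb_pow, div_mul_eq_mul_div,
    le_div_iff₀ hv']
  nlinarith

lemma two_rpow_neg_sq_le {n : ℕ} {v : ℝ} (hv : v ≤ n) :
    (2 : ℝ) ^ (-((n : ℝ) + 1) ^ 2) ≤ 2 ^ (-(n * v)) := by
  refine Real.rpow_le_rpow_of_exponent_le one_le_two ?_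
  nlinarith [mul_le_mul_of_nonneg_left hv n.cast_nonneg, (n.cast_nonneg : (0 : ℝ) ≤ n)]

lemma one_sub_exp_neg_sq_pos (n : ℕ) : 0 < 1 - Real.exp (-((n : ℝ) + 1) ^ 2) := by
  rw [sub_pos, Real.exp_lt_one_iff, neg_lt_zero]
  positivity

lemma simD_one_add_le {Q : Y → ℝ≥0∞} (hW : IsChannel W) (hQ : IsDist Q) {t : ℝ≥0} (ht : 0 < t)
    {r I : ℝ} (hr : 0 ≤ r) (hI : ∀ x, renyiD (1 + t) (W x) Q ≤ I) {n : ℕ} (hn : t * (r - I) ≤ n) :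
    simD (1 + t) (prodCh n W) (Real.logb 2 (codebookSize r n)) ≤
      ((4 + 2 / t) * 2 ^ (-(n * (t * (r - I)))) : ℝ) := by
  obtain ⟨N, hN, hle⟩ := exists_isSimulation_prodCh hW hQ hr n
  have hprod (xs : Fin n → X) : renyiD (1 + t) (prodCh n W xs) (prodDist n Q) ≤ (n * I : ℝ) := by
    simpa using!
      renyiD_one_add_pi_le ht (fun i => hW.isDist (xs i)) (fun _ => hQ) fun i => hI (xs i)
  refine simD_le hN fun xs => (renyiD_one_add_le_of_mul_min_le ((hW.prodCh n).isDist xs) ht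
    (one_sub_exp_neg_sq_pos n) (hle xs) (hprod xs)).trans (EReal.coe_le_coe_iff.2 ?_)
  have hu : (1 : ℝ) ≤ ((n : ℝ) + 1) ^ 2 := one_le_pow₀ (by simp)
  calc _ ≤ 4 * 2 ^ (-((n : ℝ) + 1) ^ 2) + (t : ℝ)⁻¹ * (2 * 2 ^ (t * (n * I - n * r))) := by
        gcongr
        · exact neg_logb_one_sub_exp_le hu
        · exact logb_two_one_add_le (by positivity)
    _ ≤ 4 * 2 ^ (-(n * (t * (r - I)))) + (t : ℝ)⁻¹ * (2 * 2 ^ (t * (n * I - n * r))) := by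
        gcongr ?_ + _
        exact mul_le_mul_of_nonneg_left (two_rpow_neg_sq_le hn) (by norm_num)
    _ = (4 + 2 / t) * 2 ^ (-(n * (t * (r - I)))) := by
        rw [show t * (n * I - n * r) = -(n * (t * (r - I))) by ring]
        ring

lemma simD_top_le {Q : Y → ℝ≥0∞} (hW : IsChannel W) (hQ : IsDist Q) {r : ℝ} (hr : 0 ≤ r)
    (hQr : ∀ x, renyiD ⊤ (W x) Q ≤ r) (n : ℕ) :
    simD ⊤ (prodCh n W) (Real.logb 2 (codebookSize r n)) ≤ (4 * 2 ^ (-((n : ℝ) + 1) ^ 2) : ℝ) := by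
  obtain ⟨N, hN, hle⟩ := exists_isSimulation_prodCh hW hQ hr n
  have hprod (xs : Fin n → X) : renyiD ⊤ (prodCh n W xs) (prodDist n Q) ≤ (n * r : ℝ) := by
    simpa using! renyiD_top_pi_le fun i => hQr (xs i)
  refine simD_le hN fun xs =>
    (renyiD_top_le_of_mul_le (one_sub_exp_neg_sq_pos n) fun ys => ?_).trans <|
      EReal.coe_le_coe_iff.2 (neg_logb_one_sub_exp_le (one_le_pow₀ (by simp)))
  simpa only [min_eq_left (renyiD_top_le_iff.1 (hprod xs) ys)] using hle xs ys

lemma nonneg_of_renyiD_top_le {P Q : Y → ℝ≥0∞} (hP : IsDist P) (hQ : IsDist Q) {r : ℝ}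
    (h : renyiD ⊤ P Q ≤ r) : 0 ≤ r := by
  have hsum : ∑ y, P y ≤ ∑ y, ENNReal.ofReal (2 ^ r) * Q y :=
    Finset.sum_le_sum fun y _ => renyiD_top_le_iff.1 h y
  rw [← Finset.mul_sum, hP.sum_eq_one, hQ.sum_eq_one, mul_one, ENNReal.one_le_ofReal] at hsum
  exact (Real.rpow_le_rpow_left_iff one_lt_two).1 (by simpa using hsum)

lemma Erf_eq_top [Nonempty X] (hW : IsChannel W) (α : ℝ≥0∞) {r : ℝ} (hr : renyiCap ⊤ W ≤ r) :
    Erf α W r = ⊤ := by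
  obtain ⟨Q, hQ, hQcap⟩ := exists_isDist_renyiD_top_le_renyiCap hW
  have hQr x : renyiD ⊤ (W x) Q ≤ r := (hQcap x).trans hr
  have hr0 : 0 ≤ r := nonneg_of_renyiD_top_le (hW.isDist (Classical.arbitrary X)) hQ (hQr _)
  refine top_le_iff.1 (le_trans ?_ (Erf_antitone hW r le_top))
  refine EReal.ge_of_forall_gt_iff_ge.1 fun v _ => ?_
  refine coe_le_Erf_of_eventually_simD_le (rateOK_logb_codebookSize hr0) (C := 4) ?_
  filter_upwards [tendsto_natCast_atTop_atTop.eventually_ge_atTop v] with n hn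
  refine (simD_top_le hW hQ hr0 hQr n).trans (EReal.coe_le_coe_iff.2 ?_)
  exact mul_le_mul_of_nonneg_left (two_rpow_neg_sq_le hn) (by norm_num)

lemma lt_sub_div_of_lt_mul_sub {t v r : ℝ} (ht : 0 < t) {c : EReal}
    (h : (v : EReal) < t * (r - c)) : c < (r - v / t : ℝ) := by
  induction c with
  | top => simp [EReal.coe_mul_bot_of_pos ht] at h
  | bot => exact EReal.bot_lt_coe _
  | coe c =>
    norm_cast at h ⊢
    rw [lt_sub_comm, div_lt_iff₀' ht]
    exact h

variable [Nonempty Y]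

lemma mul_sub_renyiCap_le_Erf_one_add (hW : IsChannel W) {r : ℝ} (hr : 0 ≤ r) {t : ℝ≥0}
    (ht : 0 < t) : (t : EReal) * (r - renyiCap (1 + t) W) ≤ Erf (1 + t) W r := by
  have ht' : (0 : ℝ) < t := by exact_mod_cast ht
  refine EReal.ge_of_forall_gt_iff_ge.1 fun v hv => ?_
  obtain ⟨I, hI, rfl⟩ : ∃ I : ℝ, renyiCap (1 + t) W < I ∧ t * (r - I) = v := by
    refine ⟨r - v / t, lt_sub_div_of_lt_mul_sub ht' hv, ?_⟩
    field_simp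
    ring
  obtain ⟨Q, hQ, hQI⟩ := exists_isDist_renyiD_one_add_le_of_renyiCap_lt ht hW hI
  refine coe_le_Erf_of_eventually_simD_le (rateOK_logb_codebookSize hr) (C := 4 + 2 / t) ?_
  filter_upwards [tendsto_natCast_atTop_atTop.eventually_ge_atTop (t * (r - I))] with n hn
  exact simD_one_add_le hW hQ ht hr hQI hn

lemma mul_sub_renyiCap_le_Erf [Nonempty X] (hW : IsChannel W) {r : ℝ} (hr : 0 ≤ r) {t : ℝ≥0∞}
    (hαt : α ≤ 1 + t) : (t : EReal) * (r - renyiCap (1 + t) W) ≤ Erf α W r := by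
  rcases le_or_gt (renyiCap ⊤ W) r with hcap | hcap
  · simp [Erf_eq_top hW α hcap]
  · induction t with
    | top =>
      have hneg : (r : EReal) - renyiCap ⊤ W < 0 := (EReal.sub_neg (by simp) (by simp)).2 hcap
      simp [EReal.top_mul_of_neg hneg]
    | coe t =>
      rcases eq_zero_or_pos t with rfl | ht
      · simpa using Erf_nonneg hW α hr
      · exact (mul_sub_renyiCap_le_Erf_one_add hW hr ht).trans (Erf_antitone hW r hαt)

end ReliabilityFunction

theorem reliability_function_achievability_general
    {X Y : Type*} [Fintype X] [Fintype Y] [Nonempty X] [Nonempty Y]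
    (W : X → Y → ℝ≥0∞) (hW : IsChannel W) (α : ℝ≥0∞) :
    (∀ r : ℝ, 0 ≤ r →
      max (⨆ (t : ℝ≥0∞) (_ : α ≤ 1 + t), (t : EReal) * ((r : EReal) - renyiCap (1 + t) W)) 0 ≤
        Erf α W r) ∧
    (∀ r : ℝ, renyiCap ⊤ W ≤ (r : EReal) → Erf α W r = ⊤) :=
  ⟨fun _ hr => max_le (iSup₂_le fun _ => mul_sub_renyiCap_le_Erf hW hr) (Erf_nonneg hW α hr),
    fun _ hr => Erf_eq_top hW α hr⟩

/-- **Achievability of the reliability function** (Theorem 5).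
For `0 ≤ r < I_∞(W)`: `E_rf^{(1+s)}(W,r) ≥ sup_{t ≥ 0} t(r - I_{1+t}(W))` for
`s ∈ (-1,0]`, and `E_rf^{(1+s)}(W,r) ≥ |sup_{t ≥ s} t(r - I_{1+t}(W))|⁺` for
`s ∈ (0,∞]`; moreover, for `r ≥ I_∞(W)`, `E_rf^{(1+s)}(W,r) = ∞` for all `s ∈ (0,∞]`. -/
theorem reliability_function_achievability
    {X Y : Type*} [Fintype X] [Fintype Y] [Nonempty X] [Nonempty Y]
    (W : X → Y → ℝ≥0∞) (hW : IsChannel W) :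
    (∀ r : ℝ, 0 ≤ r → (r : EReal) < renyiCap ⊤ W →
      (∀ s : ℝ, -1 < s → s ≤ 0 →
        (⨆ t : ℝ≥0∞, (t : EReal) * ((r : EReal) - renyiCap (1 + t) W)) ≤
          Erf (ENNReal.ofReal (1 + s)) W r) ∧
      (∀ s : ℝ≥0∞, 0 < s →
        max (⨆ t : {t : ℝ≥0∞ // s ≤ t},
            (t.1 : EReal) * ((r : EReal) - renyiCap (1 + t.1) W)) 0 ≤
          Erf (1 + s) W r)) ∧
    (∀ r : ℝ, renyiCap ⊤ W ≤ (r : EReal) → ∀ s : ℝ≥0∞, 0 < s →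
      Erf (1 + s) W r = ⊤) := by
  have hgen α := reliability_function_achievability_general W hW α
  refine ⟨fun r hr _ => ⟨fun s _ hs => ?_, fun s _ => ?_⟩, fun r hr s _ => (hgen (1 + s)).2 r hr⟩
  · have hα (t : ℝ≥0∞) : ENNReal.ofReal (1 + s) ≤ 1 + t :=
      (ENNReal.ofReal_le_one.2 (by linarith)).trans le_self_add
    simpa [hα] using (le_max_left _ _).trans ((hgen (ENNReal.ofReal (1 + s))).1 r hr)
  · simpa [iSup_subtype, ENNReal.add_le_add_iff_left] using (hgen (1 + s)).1 r hr

end RST
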